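/- arXiv:2205.11125 — 2 statements merged into one kernel-verified Lean document; each statement's English description precedes it below -/
import Mathlib

section
/- Let G be a finite simple connected graph in which every vertex has even degree, suppose G has an odd number of edges, and let u_G be any fixed vertex of G. Then G admits a 2-edge-coloring c : E(G) → {1,2} such that, for every vertex u of G distinct from u_G and each color α ∈ {1,2}, exactly d_G(u)/2 of the edges incident with u have color α, while at u_G one of the two colors appears on exactly d_G(u_G)/2 + 1 of the incident edges and the other on exactly d_G(u_G)/2 − 1 of them. -/
/-!
A connected graph with all degrees even has an Eulerian circuit, which may be rooted at `uG`: every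
edge at the start of a longest trail is used, so by parity such a trail is closed; being closed, it
can be rotated, so it uses every edge at each vertex it visits, and by connectivity it visits every
vertex.

Color the edges of the circuit alternately. Each passage through a vertex uses one edge of each
color, except that the first and the last edge, which both meet `uG`, have the same color because
the number of edges is odd.
-/

open Finset SimpleGraph

section Incidence

variable {V : Type*} [DecidableEq V] {G : SimpleGraph V} {u v x : V} {p : G.Walk u v}
  [Fintype (G.neighborSet x)]

lemma filter_mem_toFinset_edges_eq_incidenceFinset (hx : G.incidenceSet x ⊆ p.edgeSet) :
    {e ∈ p.edges.toFinset | x ∈ e} = G.incidenceFinset x := by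
  ext e
  simp only [mem_filter, List.mem_toFinset, mem_incidenceFinset]
  exact ⟨fun ⟨he, hxe⟩ ↦ ⟨p.edges_subset_edgeSet he, hxe⟩, fun he ↦ ⟨hx he, he.2⟩⟩

lemma countP_mem_edges_eq_degree (hp : p.IsTrail) (hx : G.incidenceSet x ⊆ p.edgeSet) :
    p.edges.countP (x ∈ ·) = G.degree x := by
  rw [← card_incidenceFinset_eq_degree, ← filter_mem_toFinset_edges_eq_incidenceFinset hx,
    List.countP_eq_length_filter, ← List.toFinset_card_of_nodup (hp.edges_nodup.filter _),
    List.toFinset_filter]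
  simp only [decide_eq_true_eq]

end Incidence

/-- A trail of maximum length among all trails of the graph, whatever their endpoints. -/
structure IsLongestTrail {V : Type*} {G : SimpleGraph V} {u v : V} (p : G.Walk u v) : Prop where
  isTrail : p.IsTrail
  length_le : ∀ (a b : V) (q : G.Walk a b), q.IsTrail → q.length ≤ p.length

namespace IsLongestTrail

variable {V : Type*} {G : SimpleGraph V} {u v : V}

lemma incidenceSet_start_subset {p : G.Walk u v} (hp : IsLongestTrail p) :
    G.incidenceSet u ⊆ p.edgeSet := by
  rintro _ ⟨hadj, w, rfl⟩
  rw [mem_edgeSet] at hadj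
  by_contra hunused
  have hlonger : (Walk.cons hadj.symm p).IsTrail :=
    hp.isTrail.cons _ (by rwa [Sym2.eq_swap])
  exact Nat.not_succ_le_self _ (hp.length_le _ _ _ hlonger)

lemma eq_of_even_degree [Fintype (G.neighborSet u)] {p : G.Walk u v} (hp : IsLongestTrail p)
    (heven : Even (G.degree u)) : u = v := by
  classical
  rw [← countP_mem_edges_eq_degree hp.isTrail hp.incidenceSet_start_subset,
    hp.isTrail.even_countP_edges_iff] at heven
  by_contra hne
  exact (heven hne).1 rfl

variable {p : G.Walk u u}

lemma rotate [DecidableEq V] (hp : IsLongestTrail p) {x : V} (hx : x ∈ p.support) :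
    IsLongestTrail (p.rotate x hx) where
  isTrail := hp.isTrail.rotate hx
  length_le a b q hq := by simpa only [Walk.length_rotate] using hp.length_le a b q hq

lemma mem_edges_of_mem_support (hp : IsLongestTrail p) {x y : V} (hx : x ∈ p.support)
    (hxy : G.Adj x y) : s(x, y) ∈ p.edges := by
  classical
  exact (p.rotate_edges x hx).mem_iff.1 <|
    (hp.rotate hx).incidenceSet_start_subset ⟨hxy, Sym2.mem_mk_left x y⟩

lemma mem_support (hp : IsLongestTrail p) (hconn : G.Preconnected) (x : V) : x ∈ p.support := by
  by_contra hx
  obtain ⟨w⟩ := hconn u x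
  obtain ⟨d, -, hfst, hsnd⟩ := w.exists_boundary_dart {y | y ∈ p.support} p.start_mem_support hx
  exact hsnd (p.snd_mem_support_of_mem_edges (hp.mem_edges_of_mem_support hfst d.adj))

lemma isEulerian [DecidableEq V] (hp : IsLongestTrail p) (hconn : G.Preconnected) : p.IsEulerian :=
  hp.isTrail.isEulerian_of_forall_mem <| Sym2.ind fun x _ hxy ↦
    hp.mem_edges_of_mem_support (hp.mem_support hconn x) hxy

end IsLongestTrail

theorem exists_isEulerian_of_even_degree {V : Type*} [DecidableEq V] {G : SimpleGraph V}
    [Finite G.edgeSet] [G.LocallyFinite] (hconn : G.Preconnected)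
    (heven : ∀ u, Even (G.degree u)) (u : V) : ∃ p : G.Walk u u, p.IsEulerian := by
  have : Nonempty V := ⟨u⟩
  obtain ⟨a, b, p, hp, hmax⟩ := Walk.exists_isTrail_forall_isTrail_length_le_length G
  have hlongest : IsLongestTrail p := ⟨hp, hmax⟩
  obtain rfl := hlongest.eq_of_even_degree (heven a)
  exact ⟨p.rotate u _, (hlongest.rotate (hlongest.mem_support hconn u)).isEulerian hconn⟩

section TwoColoring

variable {α : Type*} (s : Finset α) (c : α → Fin 2)

lemma card_filter_zero_add_card_filter_one :
    #{a ∈ s | c a = 0} + #{a ∈ s | c a = 1} = #s := by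
  simpa only [Fin.sum_univ_two] using
    (card_eq_sum_card_fiberwise (s := s) (t := univ) fun a _ ↦ mem_univ (c a)).symm

lemma card_filter_zero_sub_card_filter_one :
    (#{a ∈ s | c a = 0} : ℤ) - #{a ∈ s | c a = 1} = ∑ a ∈ s, (-1) ^ (c a : ℕ) := by
  have hsign (i : Fin 2) :
      (-1 : ℤ) ^ (i : ℕ) = (if i = 0 then 1 else 0) - (if i = 1 then 1 else 0) := by
    fin_cases i <;> rfl
  simp only [hsign, sum_sub_distrib, sum_boole]

end TwoColoring

section AlternatingColoring

variable {V : Type*} [DecidableEq V] {G : SimpleGraph V} {u v : V}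

/-- The coloring of the edges of a trail by `0, 1, 0, 1, …` along the trail. It is defined for every
walk, an edge getting the parity of its first position; edges off the walk have a junk color. -/
def alternatingColoring (p : G.Walk u v) (e : Sym2 V) : Fin 2 :=
  Fin.ofNat 2 (p.edges.idxOf e)

lemma neg_one_pow_alternatingColoring (p : G.Walk u v) (e : Sym2 V) :
    (-1 : ℤ) ^ (alternatingColoring p e : ℕ) = (-1) ^ p.edges.idxOf e :=
  (neg_one_pow_eq_pow_mod_two _).symm

/-- Consecutive edges of the trail contribute opposite signs at their common vertex, so the sum
telescopes to the contributions of the two ends. -/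
lemma sum_neg_one_pow_alternatingColoring {p : G.Walk u v} (hp : p.IsTrail) (x : V) :
    ∑ e ∈ p.edges.toFinset with x ∈ e, (-1 : ℤ) ^ (alternatingColoring p e : ℕ) =
      (if x = u then 1 else 0) - (-1) ^ p.length * (if x = v then 1 else 0) := by
  simp only [neg_one_pow_alternatingColoring, sum_filter]
  induction p with
  | nil => simp
  | @cons u w v huw p ih =>
    obtain ⟨hp, hnew⟩ := (Walk.isTrail_cons huw p).1 hp
    have hflip : ∀ e ∈ p.edges.toFinset,
        (if x ∈ e then (-1 : ℤ) ^ (s(u, w) :: p.edges).idxOf e else 0) =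
          -(if x ∈ e then (-1) ^ p.edges.idxOf e else 0) := by
      intro e he
      have hne : s(u, w) ≠ e := fun h ↦ hnew (h ▸ List.mem_toFinset.1 he)
      rw [List.idxOf_cons_ne _ hne, pow_succ]
      split_ifs <;> ring
    have hfirst : (if x ∈ s(u, w) then (1 : ℤ) else 0) =
        (if x = u then 1 else 0) + (if x = w then 1 else 0) := by
      have := huw.ne
      grind
    rw [Walk.edges_cons, List.toFinset_cons, sum_insert (by rwa [List.mem_toFinset]),
      List.idxOf_cons_self, pow_zero, hfirst, sum_congr rfl hflip, sum_neg_distrib, ih hp,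
      Walk.length_cons, pow_succ]
    ring

lemma card_alternatingColoring_zero_sub_card_one {p : G.Walk u v} (hp : p.IsEulerian) (x : V)
    [Fintype (G.neighborSet x)] :
    (#{e ∈ G.incidenceFinset x | alternatingColoring p e = 0} : ℤ) -
        #{e ∈ G.incidenceFinset x | alternatingColoring p e = 1} =
      (if x = u then 1 else 0) - (-1) ^ p.length * (if x = v then 1 else 0) := by
  have hx : G.incidenceSet x ⊆ p.edgeSet := fun _ he ↦ hp.mem_edges_iff.2 he.1
  rw [card_filter_zero_sub_card_filter_one, ← filter_mem_toFinset_edges_eq_incidenceFinset hx,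
    sum_neg_one_pow_alternatingColoring hp.isTrail]

end AlternatingColoring

lemma length_eq_card_edgeFinset_of_isEulerian {V : Type*} [DecidableEq V] {G : SimpleGraph V}
    [Fintype G.edgeSet] {u v : V} {p : G.Walk u v} (hp : p.IsEulerian) :
    p.length = #G.edgeFinset := by
  rw [← hp.edgesFinset_eq, ← Walk.length_edges]
  rfl

/-- Let `G` be a finite simple connected graph in which every vertex has even
degree, with an odd number of edges, and let `uG` be any vertex.  Then `G` admits a
`2`-edge-coloring such that, at every vertex `u ≠ uG`, each color appears on exactly
`d_G(u)/2` incident edges, while at `uG` one color appears on exactly `d_G(uG)/2 + 1`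
incident edges and the other on exactly `d_G(uG)/2 - 1` of them. -/
theorem balanced_two_coloring_odd_size {V : Type*} [Fintype V] [DecidableEq V]
    (G : SimpleGraph V) [DecidableRel G.Adj] (hconn : G.Connected)
    (heven : ∀ u : V, Even (G.degree u)) (hodd : Odd G.edgeFinset.card) (uG : V) :
    ∃ c : Sym2 V → Fin 2,
      (∀ u : V, u ≠ uG → ∀ α : Fin 2,
        ((G.incidenceFinset u).filter (fun e => c e = α)).card = G.degree u / 2) ∧
      (∃ α β : Fin 2, α ≠ β ∧
        ((G.incidenceFinset uG).filter (fun e => c e = α)).card = G.degree uG / 2 + 1 ∧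
        ((G.incidenceFinset uG).filter (fun e => c e = β)).card = G.degree uG / 2 - 1) := by
  obtain ⟨p, hp⟩ := exists_isEulerian_of_even_degree hconn.preconnected heven uG
  have hlen : Odd p.length := length_eq_card_edgeFinset_of_isEulerian hp ▸ hodd
  let n (x : V) (α : Fin 2) : ℕ := #{e ∈ G.incidenceFinset x | alternatingColoring p e = α}
  have hsum (x : V) : n x 0 + n x 1 = G.degree x := by
    rw [card_filter_zero_add_card_filter_one, card_incidenceFinset_eq_degree]
  have hdiff (x : V) : (n x 0 : ℤ) - n x 1 = if x = uG then 2 else 0 := by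
    rw [card_alternatingColoring_zero_sub_card_one hp, hlen.neg_one_pow]
    split_ifs <;> rfl
  have hbalanced (x : V) (hx : x ≠ uG) : n x 0 = n x 1 := by
    have := hdiff x
    rw [if_neg hx] at this
    omega
  have hexcess : n uG 0 = n uG 1 + 2 := by
    have := hdiff uG
    rw [if_pos rfl] at this
    omega
  refine ⟨alternatingColoring p, fun x hx ↦ Fin.forall_fin_two.2 ?_, 0, 1, zero_ne_one, ?_⟩
  · change n x 0 = _ ∧ n x 1 = _
    grind
  · change n uG 0 = _ ∧ n uG 1 = _
    grind
end

section
/- For every integer k at least 2, every finite simple graph G of minimum degree at least k(k−1) has a (1/k)-majority (k+2)-edge-coloring. -/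
/-!
A vertex `u` of degree `d = k * q + r` with `r < k` satisfies `r ≤ k - 1 ≤ q`, hence
`d ≤ q * (k + 1)`, so `u` can be split into `q` copies, each keeping at most `k + 1` of the edges at
`u`. By Vizing's theorem the split graph has a proper edge-coloring with `k + 2` colors. Each color
occurs at most once at each copy of `u`, hence at most `q ≤ d / k` times at `u`.

Vizing's theorem is proved by adding the vertices one at a time. To add `v`, the old graph is
recolored so that distinct missing colors can be assigned to the set `N` of neighbors of `v`. Give
every vertex of `N` a list of two missing colors, except for one vertex that gets a single color,
and let `x a` be the number of lists containing `a`. Swapping `i` and `j` on a component of the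
subgraph they span changes `x i` by at most `2`, because the component is a path or a cycle and so
has at most two vertices missing `i`. If `x j + 2 < x i`, some such swap lowers `∑ a, x a ^ 2`.
Hence one may assume that the `x a` differ pairwise by at most `2`. Their sum `2 * |N| - 1` is odd
and less than twice the number of colors, so `x i = 1` for some `i`. Give `i` to the one vertex
listing it, and continue with the other vertices and the other colors, never touching the edges of
color `i` again.
-/

open Finset SimpleGraph

/-! ### Numerical lemmas -/

section Counting

variable {α β : Type*}

theorem exists_card_fiber_lt_card_fiber [DecidableEq β] (f : α → β) {s t : Finset α}
    (h : #s < #t) : ∃ b, #{x ∈ s | f x = b} < #{x ∈ t | f x = b} := by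
  classical
  have hs := card_eq_sum_card_fiberwise (f := f) (s := s) (t := (s ∪ t).image f)
    fun x hx ↦ mem_image_of_mem f (mem_union_left t hx)
  have ht := card_eq_sum_card_fiberwise (f := f) (s := t) (t := (s ∪ t).image f)
    fun x hx ↦ mem_image_of_mem f (mem_union_right s hx)
  obtain ⟨b, -, hb⟩ := exists_lt_of_sum_lt (hs ▸ ht ▸ h)
  exact ⟨b, hb⟩

theorem exists_card_fiber_le [Fintype β] [DecidableEq β] [Nonempty β] {s : Finset α} {m : ℕ}
    (h : #s ≤ Fintype.card β * m) : ∃ p : α → β, ∀ b, #{x ∈ s | p x = b} ≤ m := by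
  classical
  obtain ⟨g⟩ : Nonempty (s ↪ β × Fin m) :=
    Function.Embedding.nonempty_of_card_le (by simpa using h)
  let p (x : α) : β := if hx : x ∈ s then (g ⟨x, hx⟩).1 else Classical.arbitrary β
  have hp {x : α} (hx : x ∈ s) : p x = (g ⟨x, hx⟩).1 := dif_pos hx
  refine ⟨p, fun b ↦ ?_⟩
  let index (x : {x ∈ s | p x = b}) : Fin m := (g ⟨x, (mem_filter.1 x.2).1⟩).2
  have hindex : Function.Injective index := by
    rintro ⟨x, hx⟩ ⟨y, hy⟩ h
    rw [mem_filter] at hx hy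
    have hblock : (g ⟨x, hx.1⟩).1 = (g ⟨y, hy.1⟩).1 := by rw [← hp, ← hp, hx.2, hy.2]
    simpa using g.injective (Prod.ext hblock h)
  simpa using Fintype.card_le_of_injective index hindex

theorem injOn_update_of_injOn_erase [DecidableEq α] {f : α → β} {s : Finset α} {v : α} {b : β}
    (hf : Set.InjOn f (s.erase v)) (hb : ∀ u ∈ s.erase v, f u ≠ b) :
    Set.InjOn (Function.update f v b) s := by
  have hupdate : Set.EqOn f (Function.update f v b) (s.erase v) :=
    fun u hu ↦ (Function.update_of_ne (ne_of_mem_erase hu) b f).symm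
  refine Set.InjOn.mono (s₂ := insert v ↑(s.erase v)) (by simp [Set.subset_insert])
    ((Set.injOn_insert (by simp)).2 ⟨hf.congr hupdate, ?_⟩)
  rintro ⟨u, hu, huv⟩
  rw [← hupdate hu, Function.update_self] at huv
  exact hb u hu huv

theorem sum_sq_lt_sum_sq_of_transfer {K : Finset α} {x y : α → ℕ} {i j : α} (hi : i ∈ K)
    (hj : j ∈ K) (hij : i ≠ j) (hsum : y i + y j = x i + x j) (hlower : x j < y i)
    (hupper : y i < x i) (hrest : ∀ a, a ≠ i → a ≠ j → y a = x a) :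
    ∑ a ∈ K, y a ^ 2 < ∑ a ∈ K, x a ^ 2 := by
  classical
  have hpair : y i ^ 2 + y j ^ 2 < x i ^ 2 + x j ^ 2 := by
    zify at *
    nlinarith
  have hsub : {i, j} ⊆ K := by simp [insert_subset_iff, hi, hj]
  rw [← sum_sdiff hsub, ← sum_sdiff hsub, sum_pair hij, sum_pair hij]
  refine add_lt_add_of_le_of_lt (sum_congr rfl fun a ha ↦ ?_).le hpair
  simp only [mem_sdiff, mem_insert, mem_singleton, not_or] at ha
  rw [hrest a ha.2.1 ha.2.2]

-- If no entry is `1`, then some entry is `0`, so every entry is `0` or `2` and the sum is even.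
theorem exists_eq_one_of_odd_sum {K : Finset α} {x : α → ℕ} (hodd : Odd (∑ a ∈ K, x a))
    (hlt : ∑ a ∈ K, x a < 2 * #K) (hbal : ∀ i ∈ K, ∀ j ∈ K, x i ≤ x j + 2) :
    ∃ i ∈ K, x i = 1 := by
  by_contra! hne
  obtain ⟨i, hi, hi2⟩ : ∃ i ∈ K, x i < 2 :=
    exists_lt_of_sum_lt (by simpa [mul_comm] using hlt)
  have heven : Even (∑ a ∈ K, x a) := by
    refine even_sum _ fun a ha ↦ ?_
    have hzero_or_two : x a = 0 ∨ x a = 2 := by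
      have := hne i hi
      have := hne a ha
      have := hbal a ha i hi
      omega
    rcases hzero_or_two with h | h <;> simp [h]
  exact Nat.not_even_iff_odd.2 hodd heven

end Counting

theorem card_degree_le_one_le_two_of_connected {V : Type*} [Fintype V] {A : SimpleGraph V}
    [DecidableRel A.Adj] (hA : A.Connected) (hdeg : ∀ x, A.degree x ≤ 2) :
    #{x | A.degree x ≤ 1} ≤ 2 := by
  have hedges : Fintype.card V ≤ #A.edgeFinset + 1 := by
    have := hA.card_vert_le_card_edgeSet_add_one
    rwa [Nat.card_eq_fintype_card, Nat.card_eq_fintype_card, ← edgeFinset_card] at this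
  have hsum : ∑ x, A.degree x + #{x | A.degree x ≤ 1} ≤ 2 * Fintype.card V := by
    calc ∑ x, A.degree x + #{x | A.degree x ≤ 1}
        = ∑ x, (A.degree x + if A.degree x ≤ 1 then 1 else 0) := by
          rw [sum_add_distrib, card_filter]
      _ ≤ ∑ _x : V, 2 := sum_le_sum fun x _ ↦ by have := hdeg x; split_ifs <;> omega
      _ = 2 * Fintype.card V := by simp [mul_comm]
  rw [A.sum_degrees_eq_twice_card_edges] at hsum
  omega

/-! ### Kempe changes -/

/-- A proper edge-coloring of `H`. The coloring is a function on all unordered pairs, and its values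
off the edges of `H` are irrelevant. -/
def IsProperEdgeColoring {V C : Type*} (H : SimpleGraph V) (c : Sym2 V → C) : Prop :=
  ∀ ⦃x y z⦄, H.Adj x y → H.Adj x z → c s(x, y) = c s(x, z) → y = z

/-- The color `a` is missing at the vertex `u`: no edge of `H` at `u` has color `a`. -/
def IsMissingAt {V C : Type*} (H : SimpleGraph V) (c : Sym2 V → C) (u : V) (a : C) : Prop :=
  ∀ y, H.Adj u y → c s(u, y) ≠ a

/-- The colorings `c` and `c'` have the same color classes outside `K`, so that passing from one to
the other only involves edges with colors in `K`. -/
def AgreeOutside {V C : Type*} (K : Finset C) (c c' : Sym2 V → C) : Prop :=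
  ∀ e, ∀ a ∉ K, c' e = a ↔ c e = a

/-- `L` assigns to every vertex of `N` a list of colors of `K` that are missing at that vertex. -/
structure IsMissingList {V C : Type*} (H : SimpleGraph V) (c : Sym2 V → C) (K : Finset C)
    (N : Finset V) (L : V → Finset C) : Prop where
  subset : ∀ u ∈ N, L u ⊆ K
  missing : ∀ u ∈ N, ∀ a ∈ L u, IsMissingAt H c u a

/-- The spanning subgraph of `H` formed by the edges of color `i` or `j`; its components are the
Kempe chains. -/
def kempeGraph {V C : Type*} (H : SimpleGraph V) (c : Sym2 V → C) (i j : C) : SimpleGraph V :=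
  H ⊓ fromEdgeSet (c ⁻¹' {i, j})

section Kempe

variable {V C : Type*} {H : SimpleGraph V} {c c' c'' : Sym2 V → C} {K : Finset C} {N : Finset V}
  {L : V → Finset C} {i j : C}

theorem IsProperEdgeColoring.mono {A : SimpleGraph V} (hc : IsProperEdgeColoring H c) (h : A ≤ H) :
    IsProperEdgeColoring A c :=
  fun _ _ _ hy hz ↦ hc (h hy) (h hz)

theorem IsProperEdgeColoring.degree_le_card (hc : IsProperEdgeColoring H c) {u : V}
    [Fintype (H.neighborSet u)] {T : Finset C} (hT : ∀ y, H.Adj u y → c s(u, y) ∈ T) :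
    H.degree u ≤ #T :=
  card_le_card_of_injOn (fun y ↦ c s(u, y)) (fun y hy ↦ hT y ((mem_neighborFinset ..).1 hy))
    fun _ hy _ hz ↦ hc ((mem_neighborFinset ..).1 hy) ((mem_neighborFinset ..).1 hz)

theorem AgreeOutside.trans (h : AgreeOutside K c c') (h' : AgreeOutside K c' c'') :
    AgreeOutside K c c'' :=
  fun e a ha ↦ (h' e a ha).trans (h e a ha)

theorem AgreeOutside.mono {K' : Finset C} (h : AgreeOutside K c c') (hK : K ⊆ K') :
    AgreeOutside K' c c' :=
  fun e a ha ↦ h e a fun haK ↦ ha (hK haK)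

theorem AgreeOutside.isMissingAt {u : V} {a : C} (h : AgreeOutside K c c') (ha : a ∉ K)
    (hmiss : IsMissingAt H c u a) : IsMissingAt H c' u a :=
  fun y hy hya ↦ hmiss y hy ((h _ a ha).1 hya)

theorem kempeGraph_adj {x y : V} :
    (kempeGraph H c i j).Adj x y ↔ H.Adj x y ∧ (c s(x, y) = i ∨ c s(x, y) = j) := by
  have : H.Adj x y → x ≠ y := Adj.ne
  simp only [kempeGraph, inf_adj, fromEdgeSet_adj, Set.mem_preimage, Set.mem_insert_iff,
    Set.mem_singleton_iff]
  tauto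

theorem kempeGraph_le : kempeGraph H c i j ≤ H :=
  inf_le_left

theorem card_le_two_of_isMissingAt_of_mem_component [Finite V] (hc : IsProperEdgeColoring H c)
    (S : (kempeGraph H c i j).ConnectedComponent) {X : Finset V}
    (hX : ∀ u ∈ X, IsMissingAt H c u i) (hXS : ∀ u ∈ X, u ∈ S.supp) : #X ≤ 2 := by
  classical
  have := Fintype.ofFinite V
  have hproper := hc.mono (kempeGraph_le (c := c) (i := i) (j := j))
  have hconn : ((kempeGraph H c i j).induce S.supp).Connected := S.connected_toSimpleGraph
  have hdeg_component (u : S.supp) :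
      ((kempeGraph H c i j).induce S.supp).degree u = (kempeGraph H c i j).degree u :=
    degree_induce_of_neighborSet_subset fun _ hy ↦ S.mem_supp_of_adj_mem_supp u.2 hy
  have hdeg_le_two (u : V) : (kempeGraph H c i j).degree u ≤ 2 :=
    (hproper.degree_le_card (T := {i, j}) fun y hy ↦ by simpa using (kempeGraph_adj.1 hy).2).trans
      card_le_two
  have hdeg_le_one (u : V) (hu : u ∈ X) : (kempeGraph H c i j).degree u ≤ 1 :=
    hproper.degree_le_card (T := {j}) fun y hy ↦ mem_singleton.2 <|
      (kempeGraph_adj.1 hy).2.resolve_left (hX u hu y (kempeGraph_adj.1 hy).1)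
  refine le_trans (card_le_card_of_surjOn Subtype.val fun u hu ↦ ?_)
    (card_degree_le_one_le_two_of_connected hconn
      fun u ↦ (hdeg_component u).trans_le (hdeg_le_two u))
  refine ⟨⟨u, hXS u hu⟩, ?_, rfl⟩
  simpa [hdeg_component] using hdeg_le_one u hu

open Classical in
/-- The permutation of the colors that a Kempe change on `S` performs at the vertex `u`. -/
noncomputable def kempePerm (S : Set V) (i j : C) (u : V) : Equiv.Perm C :=
  if u ∈ S then Equiv.swap i j else 1

open Classical in
/-- The Kempe change: exchange `i` and `j` on the edges inside `S`. -/
noncomputable def kempeSwap (S : Set V) (i j : C) (c : Sym2 V → C) (e : Sym2 V) : C :=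
  if ∀ x ∈ e, x ∈ S then Equiv.swap i j (c e) else c e

/-- The lists adapted to the coloring `kempeSwap S i j c`. -/
noncomputable def kempeSwapList (S : Set V) (i j : C) (L : V → Finset C) (u : V) : Finset C :=
  (L u).map (kempePerm S i j u).toEmbedding

open Classical in
/-- The number of vertices of `N` whose list contains the color `a`. -/
noncomputable def listCount (N : Finset V) (L : V → Finset C) (a : C) : ℕ :=
  #{u ∈ N | a ∈ L u}

theorem kempePerm_mem (S : Set V) (hi : i ∈ K) (hj : j ∈ K) (u : V) {a : C} (ha : a ∈ K) :
    kempePerm S i j u a ∈ K := by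
  classical
  unfold kempePerm
  split_ifs
  · rw [Equiv.swap_apply_def]
    split_ifs <;> assumption
  · exact ha

theorem kempeSwap_apply_of_adj (S : (kempeGraph H c i j).ConnectedComponent) {x y : V}
    (hxy : H.Adj x y) :
    kempeSwap S.supp i j c s(x, y) = kempePerm S.supp i j x (c s(x, y)) := by
  classical
  by_cases hij : c s(x, y) = i ∨ c s(x, y) = j
  · have hmem := S.mem_supp_congr_adj (kempeGraph_adj.2 ⟨hxy, hij⟩)
    by_cases hx : x ∈ S.supp
    · simp only [kempeSwap, kempePerm, Sym2.ball, hx, hmem.1 hx, and_self, if_true]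
    · simp only [kempeSwap, kempePerm, Sym2.ball, hx, false_and, if_false, Equiv.Perm.one_apply]
  · rw [not_or] at hij
    by_cases hx : x ∈ S.supp <;>
      simp [kempeSwap, kempePerm, hx, Equiv.swap_apply_of_ne_of_ne hij.1 hij.2]

theorem IsProperEdgeColoring.kempeSwap (hc : IsProperEdgeColoring H c)
    (S : (kempeGraph H c i j).ConnectedComponent) :
    IsProperEdgeColoring H (kempeSwap S.supp i j c) := by
  intro x y z hy hz h
  rw [kempeSwap_apply_of_adj S hy, kempeSwap_apply_of_adj S hz] at h
  exact hc hy hz ((kempePerm ..).injective h)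

theorem agreeOutside_kempeSwap (S : Set V) (hi : i ∈ K) (hj : j ∈ K) :
    AgreeOutside K c (kempeSwap S i j c) := by
  classical
  intro e a ha
  have hswap : Equiv.swap i j a = a :=
    Equiv.swap_apply_of_ne_of_ne (by rintro rfl; exact ha hi) (by rintro rfl; exact ha hj)
  unfold kempeSwap
  split_ifs
  · rw [← Equiv.eq_symm_apply, Equiv.symm_swap, hswap]
  · rfl

theorem IsMissingList.kempeSwap (hL : IsMissingList H c K N L) (hi : i ∈ K) (hj : j ∈ K)
    (S : (kempeGraph H c i j).ConnectedComponent) :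
    IsMissingList H (kempeSwap S.supp i j c) K N (kempeSwapList S.supp i j L) where
  subset u hu a ha := by
    obtain ⟨b, hb, rfl⟩ := mem_map.1 ha
    exact kempePerm_mem _ hi hj u (hL.subset u hu hb)
  missing u hu a ha y hy := by
    obtain ⟨b, hb, rfl⟩ := mem_map.1 ha
    rw [kempeSwap_apply_of_adj S hy]
    exact (kempePerm ..).injective.ne (hL.missing u hu b hb y hy)

theorem listCount_filter_add_listCount_filter_not (N : Finset V) (L : V → Finset C) (P : V → Prop)
    [DecidablePred P] (a : C) :
    listCount {u ∈ N | P u} L a + listCount {u ∈ N | ¬ P u} L a = listCount N L a := by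
  simp only [listCount, filter_comm]
  exact card_filter_add_card_filter_not _

open Classical in
theorem listCount_kempeSwapList (S : Set V) [DecidablePred (· ∈ S)] (N : Finset V)
    (L : V → Finset C) (i j a : C) :
    listCount N (kempeSwapList S i j L) a =
      listCount {u ∈ N | u ∈ S} L (Equiv.swap i j a) + listCount {u ∈ N | u ∉ S} L a := by
  rw [← listCount_filter_add_listCount_filter_not N _ (· ∈ S)]
  congr 1 <;> refine congrArg card (filter_congr fun u hu ↦ ?_)
  · simp [kempeSwapList, kempePerm, (mem_filter.1 hu).2, mem_map_equiv]
  · simp [kempeSwapList, kempePerm, (mem_filter.1 hu).2, Equiv.Perm.one_def]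

theorem sum_listCount (hL : ∀ u ∈ N, L u ⊆ K) : ∑ a ∈ K, listCount N L a = ∑ u ∈ N, #(L u) := by
  classical
  calc ∑ a ∈ K, listCount N L a = ∑ u ∈ N, #{a ∈ K | a ∈ L u} :=
        sum_card_bipartiteAbove_eq_sum_card_bipartiteBelow (fun a u ↦ a ∈ L u)
    _ = ∑ u ∈ N, #(L u) := sum_congr rfl fun u hu ↦ by
        rw [filter_mem_eq_inter, inter_eq_right.2 (hL u hu)]

theorem exists_component_sum_listCount_sq_lt [Finite V] (hc : IsProperEdgeColoring H c)
    (hL : IsMissingList H c K N L) (hi : i ∈ K) (hj : j ∈ K)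
    (hgap : listCount N L j + 2 < listCount N L i) :
    ∃ S : (kempeGraph H c i j).ConnectedComponent,
      ∑ a ∈ K, listCount N (kempeSwapList S.supp i j L) a ^ 2 < ∑ a ∈ K, listCount N L a ^ 2 := by
  classical
  obtain ⟨S, hS⟩ := exists_card_fiber_lt_card_fiber (kempeGraph H c i j).connectedComponentMk
    (show listCount N L j < listCount N L i by omega)
  have hlt : listCount {u ∈ N | u ∈ S.supp} L j < listCount {u ∈ N | u ∈ S.supp} L i := by
    simpa only [listCount, filter_filter, and_comm, ConnectedComponent.mem_supp_iff] using hS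
  have hle : listCount {u ∈ N | u ∈ S.supp} L i ≤ 2 := by
    refine card_le_two_of_isMissingAt_of_mem_component hc S (fun u hu ↦ ?_) fun u hu ↦ ?_
    · simp only [mem_filter] at hu
      exact hL.missing u hu.1.1 i hu.2
    · exact (mem_filter.1 (mem_filter.1 hu).1).2
  have hsplit := listCount_filter_add_listCount_filter_not N L (· ∈ S.supp)
  have hsplit_i := hsplit i
  have hsplit_j := hsplit j
  refine ⟨S, sum_sq_lt_sum_sq_of_transfer hi hj (by rintro rfl; omega) ?_ ?_ ?_ fun a hai haj ↦ ?_⟩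
  all_goals simp only [listCount_kempeSwapList, Equiv.swap_apply_left, Equiv.swap_apply_right]
  · omega
  · omega
  · omega
  · rw [Equiv.swap_apply_of_ne_of_ne hai haj, hsplit]

theorem exists_balanced_missingList [Finite V] (hc : IsProperEdgeColoring H c)
    (hL : IsMissingList H c K N L) :
    ∃ (c' : Sym2 V → C) (L' : V → Finset C), IsProperEdgeColoring H c' ∧ AgreeOutside K c c' ∧
      IsMissingList H c' K N L' ∧ (∀ u, #(L' u) = #(L u)) ∧
      ∀ i ∈ K, ∀ j ∈ K, listCount N L' i ≤ listCount N L' j + 2 := by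
  induction hm : ∑ a ∈ K, listCount N L a ^ 2 using Nat.strong_induction_on generalizing c L with
  | _ m ih =>
    subst hm
    by_cases hbal : ∀ i ∈ K, ∀ j ∈ K, listCount N L i ≤ listCount N L j + 2
    · exact ⟨c, L, hc, fun _ _ _ ↦ Iff.rfl, hL, fun _ ↦ rfl, hbal⟩
    push Not at hbal
    obtain ⟨i, hi, j, hj, hgap⟩ := hbal
    obtain ⟨S, hS⟩ := exists_component_sum_listCount_sq_lt hc hL hi hj hgap
    obtain ⟨c', L', hc', hagree, hL', hcard, hbal⟩ :=
      ih _ hS (hc.kempeSwap S) (hL.kempeSwap hi hj S) rfl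
    exact ⟨c', L', hc', (agreeOutside_kempeSwap _ hi hj).trans hagree, hL',
      fun u ↦ (hcard u).trans (card_map _), hbal⟩

end Kempe

/-! ### Vizing's theorem -/

section MissingColors

variable {V C : Type*} {H : SimpleGraph V} {c : Sym2 V → C} {K : Finset C} {N : Finset V}
  {L : V → Finset C}

theorem IsMissingList.exists_sublist (hL : IsMissingList H c K N L) {n : V → ℕ}
    (hn : ∀ u ∈ N, n u ≤ #(L u)) :
    ∃ L' : V → Finset C, IsMissingList H c K N L' ∧ ∀ u ∈ N, #(L' u) = n u := by
  have hsub (u : V) : ∃ M : Finset C, u ∈ N → M ⊆ L u ∧ #M = n u := by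
    by_cases hu : u ∈ N
    · obtain ⟨M, hM⟩ := exists_subset_card_eq (hn u hu)
      exact ⟨M, fun _ ↦ hM⟩
    · exact ⟨∅, fun h ↦ absurd h hu⟩
  choose L' hL' using hsub
  exact ⟨L', ⟨fun u hu ↦ (hL' u hu).1.trans (hL.subset u hu),
    fun u hu a ha ↦ hL.missing u hu a ((hL' u hu).1 ha)⟩, fun u hu ↦ (hL' u hu).2⟩

theorem IsMissingList.erase [DecidableEq V] [DecidableEq C] (hL : IsMissingList H c K N L)
    {i : C} {v : V} (hi : ∀ u ∈ N, i ∈ L u → u = v) :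
    IsMissingList H c (K.erase i) (N.erase v) L where
  subset u hu := subset_erase.2 ⟨hL.subset u (mem_of_mem_erase hu),
    fun hiu ↦ ne_of_mem_erase hu (hi u (mem_of_mem_erase hu) hiu)⟩
  missing u hu := hL.missing u (mem_of_mem_erase hu)

theorem exists_missingList_listCount_eq_one [Finite V] [DecidableEq V]
    (hc : IsProperEdgeColoring H c) (hL : IsMissingList H c K N L) (hN : #N ≤ #K)
    {w : V} (hw : w ∈ N) (hcard : ∀ u ∈ N, (if u = w then 1 else 2) ≤ #(L u)) :
    ∃ (c' : Sym2 V → C) (L' : V → Finset C), IsProperEdgeColoring H c' ∧ AgreeOutside K c c' ∧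
      IsMissingList H c' K N L' ∧ (∀ u ∈ N, #(L' u) = if u = w then 1 else 2) ∧
      ∃ i ∈ K, listCount N L' i = 1 := by
  obtain ⟨L₀, hL₀, hcard₀⟩ := hL.exists_sublist hcard
  obtain ⟨c', L', hc', hagree, hL', hcard', hbal⟩ := exists_balanced_missingList hc hL₀
  replace hcard' (u : V) (hu : u ∈ N) : #(L' u) = if u = w then 1 else 2 :=
    (hcard' u).trans (hcard₀ u hu)
  have hsum : ∑ a ∈ K, listCount N L' a = 2 * #(N.erase w) + 1 := by
    calc ∑ a ∈ K, listCount N L' a = ∑ u ∈ N, if u = w then 1 else 2 := by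
          rw [sum_listCount hL'.subset, sum_congr rfl hcard']
      _ = ∑ u ∈ N.erase w, 2 + 1 := by
          rw [← sum_erase_add N _ hw, if_pos rfl]
          exact congrArg (· + 1) (sum_congr rfl fun u hu ↦ if_neg (ne_of_mem_erase hu))
      _ = 2 * #(N.erase w) + 1 := by rw [sum_const, smul_eq_mul, mul_comm]
  have hNw : #(N.erase w) + 1 = #N := card_erase_add_one hw
  exact ⟨c', L', hc', hagree, hL', hcard', exists_eq_one_of_odd_sum (hsum ▸ odd_two_mul_add_one _)
    (by omega) hbal⟩

theorem exists_injOn_isMissingAt [Finite V] [DecidableEq V] (hc : IsProperEdgeColoring H c)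
    (hL : IsMissingList H c K N L) (hN : #N ≤ #K) (w : V)
    (hcard : ∀ u ∈ N, (if u = w then 1 else 2) ≤ #(L u)) :
    ∃ (c' : Sym2 V → C) (f : V → C), IsProperEdgeColoring H c' ∧ AgreeOutside K c c' ∧
      Set.InjOn f N ∧ ∀ u ∈ N, f u ∈ K ∧ IsMissingAt H c' u (f u) := by
  classical
  induction hn : #N generalizing N K c L w with
  | zero =>
    obtain rfl := card_eq_zero.1 hn
    exact ⟨c, fun u ↦ c s(u, u), hc, fun _ _ _ ↦ Iff.rfl, by simp, by simp⟩
  | succ n ih =>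
    obtain ⟨w, hw, hcard⟩ : ∃ w ∈ N, ∀ u ∈ N, (if u = w then 1 else 2) ≤ #(L u) := by
      by_cases hw : w ∈ N
      · exact ⟨w, hw, hcard⟩
      · obtain ⟨w', hw'⟩ : N.Nonempty := card_pos.1 (by omega)
        refine ⟨w', hw', fun u hu ↦ ?_⟩
        have htwo : 2 ≤ #(L u) := by simpa [ne_of_mem_of_not_mem hu hw] using hcard u hu
        split_ifs <;> omega
    obtain ⟨c₁, L₁, hc₁, hagree₁, hL₁, hcard₁, i, hi, hi_one⟩ :=
      exists_missingList_listCount_eq_one hc hL hN hw hcard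
    obtain ⟨v, hv⟩ := card_eq_one.1 hi_one
    have hmem_iff (u : V) : u ∈ N ∧ i ∈ L₁ u ↔ u = v := by
      simpa using Finset.ext_iff.1 hv u
    obtain ⟨hvN, hiv⟩ := (hmem_iff v).2 rfl
    have hL_erase := hL₁.erase fun u hu hiu ↦ (hmem_iff u).1 ⟨hu, hiu⟩
    have hNv := card_erase_add_one hvN
    have hKi := card_erase_add_one hi
    obtain ⟨c₂, f, hc₂, hagree₂, hf_inj, hf⟩ := ih hc₁ hL_erase (by omega) w
      (fun u hu ↦ (hcard₁ u (mem_of_mem_erase hu)).ge) (by omega)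
    refine ⟨c₂, Function.update f v i, hc₂, hagree₁.trans (hagree₂.mono (erase_subset i K)),
      injOn_update_of_injOn_erase hf_inj fun u hu ↦ ne_of_mem_erase (hf u hu).1, fun u hu ↦ ?_⟩
    by_cases huv : u = v
    · subst huv
      simpa [hi] using hagree₂.isMissingAt (notMem_erase i K) (hL₁.missing u hvN i hiv)
    · obtain ⟨hfK, hfmiss⟩ := hf u (mem_erase.2 ⟨huv, hu⟩)
      simpa [huv] using ⟨mem_of_mem_erase hfK, hfmiss⟩

end MissingColors

section Vizing

variable {V C : Type*} {G : SimpleGraph V}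

theorem exists_isProperEdgeColoring_of_deleteIncidenceSet {v : V} {c : Sym2 V → C} {f : V → C}
    (hc : IsProperEdgeColoring (G.deleteIncidenceSet v) c) (hf : Set.InjOn f (G.neighborSet v))
    (hmiss : ∀ u ∈ G.neighborSet v, IsMissingAt (G.deleteIncidenceSet v) c u (f u)) :
    ∃ c' : Sym2 V → C, IsProperEdgeColoring G c' := by
  classical
  let c' (e : Sym2 V) : C := if h : v ∈ e then f (Sym2.Mem.other h) else c e
  have hc'_left (y : V) : c' s(v, y) = f y := by
    have h : v ∈ s(v, y) := Sym2.mem_mk_left v y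
    simp only [c', dif_pos h, Sym2.congr_right.1 (Sym2.other_spec h)]
  have hc'_right (y : V) : c' s(y, v) = f y := by rw [Sym2.eq_swap, hc'_left]
  have hc'_of_ne {x y : V} (hx : x ≠ v) (hy : y ≠ v) : c' s(x, y) = c s(x, y) :=
    dif_neg (by simp [hx.symm, hy.symm])
  refine ⟨c', fun x y z hxy hxz h ↦ ?_⟩
  have hdelete {t : V} (hx : x ≠ v) (ht : t ≠ v) (hxt : G.Adj x t) :
      (G.deleteIncidenceSet v).Adj x t := deleteIncidenceSet_adj.2 ⟨hxt, hx, ht⟩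
  by_cases hx : x = v
  · subst hx
    rw [hc'_left, hc'_left] at h
    exact hf hxy hxz h
  by_cases hy : y = v <;> by_cases hz : z = v
  · rw [hy, hz]
  · subst hy
    rw [hc'_right, hc'_of_ne hx hz] at h
    exact absurd h.symm (hmiss x hxy.symm z (hdelete hx hz hxz))
  · subst hz
    rw [hc'_right, hc'_of_ne hx hy] at h
    exact absurd h (hmiss x hxz.symm y (hdelete hx hy hxy))
  · rw [hc'_of_ne hx hy, hc'_of_ne hx hz] at h
    exact hc (hdelete hx hy hxy) (hdelete hx hz hxz) h

theorem exists_isMissingList_card_add_degree [Fintype C] (H : SimpleGraph V) [LocallyFinite H]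
    (c : Sym2 V → C) (N : Finset V) :
    ∃ L : V → Finset C, IsMissingList H c univ N L ∧ ∀ u, Fintype.card C ≤ #(L u) + H.degree u := by
  classical
  refine ⟨fun u ↦ ((H.neighborFinset u).image fun y ↦ c s(u, y))ᶜ,
    ⟨fun _ _ ↦ subset_univ _, fun u _ a ha y hy hya ↦ ?_⟩, fun u ↦ ?_⟩
  · exact mem_compl.1 ha (mem_image.2 ⟨y, (mem_neighborFinset ..).2 hy, hya⟩)
  · have := card_image_le (s := H.neighborFinset u) (f := fun y ↦ c s(u, y))
    rw [card_compl, ← card_neighborFinset_eq_degree]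
    omega

theorem degree_deleteIncidenceSet_lt {u v : V} (huv : G.Adj v u) [Fintype (G.neighborSet u)]
    [Fintype ((G.deleteIncidenceSet v).neighborSet u)] :
    (G.deleteIncidenceSet v).degree u < G.degree u := by
  refine card_lt_card ((ssubset_iff_of_subset fun y hy ↦ ?_).2 ⟨v, ?_, ?_⟩)
  · simp only [mem_neighborFinset, deleteIncidenceSet_adj] at hy ⊢
    exact hy.1
  · simpa using huv.symm
  · simp [deleteIncidenceSet_adj]

theorem exists_isProperEdgeColoring_of_degree_lt_card [Fintype V] [Fintype C] (G : SimpleGraph V)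
    [DecidableRel G.Adj] (hdeg : ∀ v, G.degree v < Fintype.card C) :
    ∃ c : Sym2 V → C, IsProperEdgeColoring G c := by
  classical
  suffices ∀ (T : Finset V) (G : SimpleGraph V) [DecidableRel G.Adj], G.support ⊆ T →
      (∀ v, G.degree v < Fintype.card C) → ∃ c : Sym2 V → C, IsProperEdgeColoring G c from
    this univ G (by simp) hdeg
  intro T
  induction T using Finset.induction_on with
  | empty =>
    intro G _ hsupp hdeg
    have hno_edge (x y : V) : ¬ G.Adj x y := fun h ↦ by simpa using hsupp ⟨y, h⟩
    have hC (e : Sym2 V) : Nonempty C :=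
      Fintype.card_pos_iff.1 ((Nat.zero_le _).trans_lt (hdeg e.out.1))
    exact ⟨fun e ↦ (hC e).some, fun x y _ h ↦ absurd h (hno_edge x y)⟩
  | insert v T _ ih =>
    intro G _ hsupp hdeg
    obtain ⟨c, hc⟩ := ih (G.deleteIncidenceSet v)
      ((G.support_deleteIncidenceSet_subset v).trans (by simpa [Set.sdiff_singleton_subset_iff]
        using hsupp))
      fun u ↦ (degree_le_of_le (G.deleteIncidenceSet_le v)).trans_lt (hdeg u)
    obtain ⟨L, hL, hcard⟩ :=
      exists_isMissingList_card_add_degree (G.deleteIncidenceSet v) c (G.neighborFinset v)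
    have htwo (u : V) (hu : u ∈ G.neighborFinset v) : 2 ≤ #(L u) := by
      have := degree_deleteIncidenceSet_lt ((mem_neighborFinset ..).1 hu)
      have := hcard u
      have := hdeg u
      omega
    obtain ⟨c', f, hc', -, hf, hmiss⟩ := exists_injOn_isMissingAt hc hL (hdeg v).le v
      fun u hu ↦ le_trans (by split_ifs <;> omega) (htwo u hu)
    exact exists_isProperEdgeColoring_of_deleteIncidenceSet hc' (by simpa using hf)
      fun u hu ↦ (hmiss u ((mem_neighborFinset ..).2 hu)).2

end Vizing

/-! ### Splitting vertices -/

/-- The graph obtained from `G` by splitting every vertex `u` into the copies `⟨u, a⟩`, where the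
edge from `u` to `v` is attached to the copy `⟨u, p u v⟩` of `u`. -/
def splitGraph {V : Type*} {ι : V → Type*} (G : SimpleGraph V) (p : ∀ u, V → ι u) :
    SimpleGraph (Σ u, ι u) where
  Adj x y := G.Adj x.1 y.1 ∧ p x.1 y.1 = x.2 ∧ p y.1 x.1 = y.2
  symm := ⟨fun _ _ h ↦ ⟨h.1.symm, h.2.2, h.2.1⟩⟩
  loopless := ⟨fun x h ↦ G.loopless.irrefl x.1 h.1⟩

/-- The edge of `splitGraph G p` that an edge of `G` becomes. -/
def splitEdge {V : Type*} {ι : V → Type*} (p : ∀ u, V → ι u) : Sym2 V → Sym2 (Σ u, ι u) :=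
  Sym2.lift ⟨fun x y ↦ s(⟨x, p x y⟩, ⟨y, p y x⟩), fun _ _ ↦ Sym2.eq_swap⟩

section Split

variable {V : Type*} {ι : V → Type*} {G : SimpleGraph V} {p : ∀ u, V → ι u}

theorem degree_splitGraph_le {u : V} {a : ι u} [Fintype (G.neighborSet u)] [DecidableEq (ι u)]
    [Fintype ((splitGraph G p).neighborSet ⟨u, a⟩)] :
    (splitGraph G p).degree ⟨u, a⟩ ≤ #{v ∈ G.neighborFinset u | p u v = a} := by
  refine card_le_card_of_injOn Sigma.fst ?_ ?_
  · rintro ⟨v, b⟩ h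
    have h : (splitGraph G p).Adj ⟨u, a⟩ ⟨v, b⟩ := by simpa using h
    simpa using ⟨h.1, h.2.1⟩
  · rintro ⟨v, b⟩ h ⟨v', b'⟩ h' (rfl : v = v')
    have h : (splitGraph G p).Adj ⟨u, a⟩ ⟨v, b⟩ := by simpa using h
    have h' : (splitGraph G p).Adj ⟨u, a⟩ ⟨v, b'⟩ := by simpa using h'
    exact congrArg (Sigma.mk v) (h.2.2.symm.trans h'.2.2)

theorem IsProperEdgeColoring.eq_of_splitEdge {C : Type*} {c : Sym2 (Σ u, ι u) → C}
    (hc : IsProperEdgeColoring (splitGraph G p) c) {u v v' : V} (hv : G.Adj u v)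
    (hv' : G.Adj u v') (hp : p u v = p u v')
    (h : c (splitEdge p s(u, v)) = c (splitEdge p s(u, v'))) : v = v' := by
  have hadj : (splitGraph G p).Adj ⟨u, p u v⟩ ⟨v, p v u⟩ := ⟨hv, rfl, rfl⟩
  have hadj' : (splitGraph G p).Adj ⟨u, p u v⟩ ⟨v', p v' u⟩ := ⟨hv', hp.symm, rfl⟩
  refine congrArg Sigma.fst (hc hadj hadj' (h.trans ?_))
  rw [hp]
  rfl

theorem card_filter_incidenceFinset [DecidableEq V] (u : V) [Fintype (G.neighborSet u)]
    (P : Sym2 V → Prop) [DecidablePred P] :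
    #{e ∈ G.incidenceFinset u | P e} = #{v ∈ G.neighborFinset u | P s(u, v)} := by
  symm
  refine card_bij (fun v _ ↦ s(u, v)) (fun v hv ↦ ?_) (fun v _ v' _ ↦ Sym2.congr_right.1) ?_
  · simpa [mk'_mem_incidenceSet_left_iff] using hv
  · intro e he
    rw [mem_filter, mem_incidenceFinset] at he
    obtain ⟨v, rfl⟩ := Sym2.mem_iff_exists.1 he.1.2
    exact ⟨v, by simpa using ⟨he.1.1, he.2⟩, rfl⟩

theorem exists_edgeColoring_card_le_of_degree_le_mul [Fintype V] [DecidableEq V]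
    (G : SimpleGraph V) [DecidableRel G.Adj] {q : V → ℕ} (hq : ∀ u, 0 < q u) {m : ℕ}
    (hdeg : ∀ u, G.degree u ≤ q u * m) :
    ∃ c : Sym2 V → Fin (m + 1), ∀ u a, #{e ∈ G.incidenceFinset u | c e = a} ≤ q u := by
  classical
  have hblocks (u : V) : ∃ p : V → Fin (q u), ∀ b, #{v ∈ G.neighborFinset u | p v = b} ≤ m :=
    have : NeZero (q u) := ⟨(hq u).ne'⟩
    exists_card_fiber_le (by simpa using hdeg u)
  choose p hp using hblocks
  obtain ⟨c, hc⟩ := exists_isProperEdgeColoring_of_degree_lt_card (C := Fin (m + 1))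
    (splitGraph G p) fun ⟨u, b⟩ ↦ by
      simpa using Nat.lt_succ_of_le (degree_splitGraph_le.trans (hp u b))
  refine ⟨c ∘ splitEdge p, fun u a ↦ ?_⟩
  rw [card_filter_incidenceFinset]
  calc _ ≤ #(univ : Finset (Fin (q u))) :=
        card_le_card_of_injOn (p u) (by simp) fun v hv v' hv' hpv ↦ by
          simp only [coe_filter, Set.mem_ofPred_eq, mem_neighborFinset] at hv hv'
          exact hc.eq_of_splitEdge hv.1 hv'.1 hpv (hv.2.trans hv'.2.symm)
    _ = q u := card_fin _

end Split

/-- For every integer `k ≥ 2`, every finite simple graph of minimum degree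
at least `k(k-1)` has a `(1/k)`-majority `(k+2)`-edge-coloring: for every vertex `u` and
every color `α`, at most a `1/k`-fraction of the edges incident with `u` have color `α`. -/
theorem inv_k_majority_k_add_two_coloring {V : Type*} [Fintype V] [DecidableEq V]
    (G : SimpleGraph V) [DecidableRel G.Adj] (k : ℕ) (hk : 2 ≤ k)
    (hmin : ∀ v : V, k * (k - 1) ≤ G.degree v) :
    ∃ c : Sym2 V → Fin (k + 2), ∀ u : V, ∀ α : Fin (k + 2),
      k * ((G.incidenceFinset u).filter (fun e => c e = α)).card ≤ G.degree u := by
  have hquot (u : V) : k - 1 ≤ G.degree u / k :=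
    (Nat.le_div_iff_mul_le (by omega)).2 (mul_comm k (k - 1) ▸ hmin u)
  have hdeg (u : V) : G.degree u ≤ G.degree u / k * (k + 1) := by
    have hmod : G.degree u % k < k := Nat.mod_lt _ (by omega)
    calc G.degree u = G.degree u / k * k + G.degree u % k := (Nat.div_add_mod' ..).symm
      _ ≤ G.degree u / k * k + G.degree u / k := by have := hquot u; omega
      _ = G.degree u / k * (k + 1) := by ring
  obtain ⟨c, hc⟩ := exists_edgeColoring_card_le_of_degree_le_mul G
    (fun u ↦ lt_of_lt_of_le (by omega) (hquot u)) hdeg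
  exact ⟨c, fun u α ↦ (Nat.mul_le_mul_left k (hc u α)).trans (Nat.mul_div_le (G.degree u) k)⟩
end
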